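/- Every odd positive integer can be written in the form 2a² + b² + c² for integers a, b, c. -/

import Mathlib

/-!
If `2 * m = u ^ 2 + v ^ 2 + w ^ 2` with `u` even, then `v` and `w` have the same parity and
`m = 2 * (u / 2) ^ 2 + ((v + w) / 2) ^ 2 + ((v - w) / 2) ^ 2`, so it suffices to write every
`n ≡ 2 [MOD 4]` as a sum of three squares. By Dirichlet's theorem and quadratic reciprocity, `n` is
the corner entry of a positive definite integer `3 × 3` matrix of determinant `1`. Hermite's bound
on the minimum of a positive definite form forces such a matrix to represent `1`; splitting off a
vector of norm `1` and repeating writes it as `Vᵀ * V`, and its corner entry is then the squared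
length of a column of `V`.
-/

section PositiveDefiniteMatrices

open Matrix

section Condensation

variable {R : Type*} [CommRing R] {n : ℕ}

/-- The block upper triangular matrix with first row `r`, zeros below `r 0`, and lower right
block `V`. It serves as elimination matrix, as extension of a change of basis by one dimension, and
as Cholesky factor. -/
def borderMatrix (r : Fin (n + 1) → R) (V : Matrix (Fin n) (Fin n) R) :
    Matrix (Fin (n + 1)) (Fin (n + 1)) R :=
  of (vecCons r fun i ↦ vecCons 0 (V i))

theorem det_borderMatrix (r : Fin (n + 1) → R) (V : Matrix (Fin n) (Fin n) R) :
    (borderMatrix r V).det = r 0 * V.det := by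
  have hblock : (borderMatrix r V).submatrix Fin.succ Fin.succ = V := rfl
  rw [det_succ_column_zero, Fin.sum_univ_succ, Fin.succAbove_zero, hblock]
  simp [borderMatrix]

theorem borderMatrix_zero_mulVec (V : Matrix (Fin n) (Fin n) R) (x : Fin (n + 1) → R) :
    borderMatrix 0 V *ᵥ x = vecCons 0 (V *ᵥ vecTail x) := by
  ext i
  cases i using Fin.cases <;> simp [borderMatrix, mulVec, vecHead, vecTail]

theorem borderMatrix_transpose_mul_self (r : Fin (n + 1) → R) (V : Matrix (Fin n) (Fin n) R) :
    (borderMatrix r V)ᵀ * borderMatrix r V = vecMulVec r r + borderMatrix 0 (Vᵀ * V) := by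
  ext i j
  cases i using Fin.cases <;> cases j using Fin.cases <;>
    simp [borderMatrix, vecMulVec_apply, mul_apply, Fin.sum_univ_succ]

/-- The Chiò condensation of a matrix at its upper left entry: the Schur complement of that entry,
multiplied by the entry so that no division occurs. -/
def chioCondensation (M : Matrix (Fin (n + 1)) (Fin (n + 1)) R) : Matrix (Fin n) (Fin n) R :=
  of fun i j ↦ M 0 0 * M i.succ j.succ - M i.succ 0 * M 0 j.succ

theorem smul_eq_vecMulVec_add_borderMatrix (M : Matrix (Fin (n + 1)) (Fin (n + 1)) R) :
    M 0 0 • M = vecMulVec (M.col 0) (M.row 0) + borderMatrix 0 (chioCondensation M) := by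
  ext i j
  cases i using Fin.cases <;> cases j using Fin.cases <;>
    simp [borderMatrix, chioCondensation, vecMulVec_apply, mul_comm]

theorem pow_mul_det_eq_mul_det_chioCondensation (M : Matrix (Fin (n + 1)) (Fin (n + 1)) R) :
    M 0 0 ^ n * M.det = M 0 0 * (chioCondensation M).det := by
  -- Scale all rows but the first by the pivot, then subtract multiples of the first row.
  have helim : (of fun i j ↦ vecCons 1 (fun _ : Fin n ↦ M 0 0) i * M i j).det =
      (borderMatrix (M 0) (chioCondensation M)).det := by
    refine det_eq_of_forall_row_eq_smul_add_const (vecCons 0 fun i ↦ M i.succ 0) 0 rfl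
      fun i j ↦ ?_
    cases i using Fin.cases <;> cases j using Fin.cases <;>
      simp [borderMatrix, chioCondensation, mul_comm]
  rw [det_mul_column, det_borderMatrix] at helim
  simpa [Fin.prod_univ_succ] using helim

theorem apply_zero_zero_mul_dotProduct_mulVec (M : Matrix (Fin (n + 1)) (Fin (n + 1)) R)
    (x y : Fin (n + 1) → R) :
    M 0 0 * (x ⬝ᵥ M *ᵥ y) =
      (x ⬝ᵥ M.col 0) * (M.row 0 ⬝ᵥ y) + vecTail x ⬝ᵥ chioCondensation M *ᵥ vecTail y := by
  calc
    M 0 0 * (x ⬝ᵥ M *ᵥ y) = x ⬝ᵥ (M 0 0 • M) *ᵥ y := by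
      rw [smul_mulVec, dotProduct_smul, smul_eq_mul]
    _ = (x ⬝ᵥ M.col 0) * (M.row 0 ⬝ᵥ y) + vecTail x ⬝ᵥ chioCondensation M *ᵥ vecTail y := by
      rw [smul_eq_vecMulVec_add_borderMatrix, add_mulVec, dotProduct_add, vecMulVec_mulVec,
        borderMatrix_zero_mulVec]
      simp [mul_comm]

theorem col_eq_row_of_isSymm {α ι : Type*} {M : Matrix ι ι α} (hM : M.IsSymm) (i : ι) :
    M.col i = M.row i :=
  congrArg (Matrix.row · i) hM

theorem exists_eq_transpose_mul_self_of_chioCondensation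
    {M : Matrix (Fin (n + 1)) (Fin (n + 1)) R} (hM : M.IsSymm) (hone : M 0 0 = 1)
    {V : Matrix (Fin n) (Fin n) R} (hV : chioCondensation M = Vᵀ * V) :
    ∃ W : Matrix (Fin (n + 1)) (Fin (n + 1)) R, M = Wᵀ * W := by
  refine ⟨borderMatrix (M.row 0) V, ?_⟩
  calc
    M = M 0 0 • M := by rw [hone, one_smul]
    _ = vecMulVec (M.row 0) (M.row 0) + borderMatrix 0 (Vᵀ * V) := by
      rw [smul_eq_vecMulVec_add_borderMatrix, col_eq_row_of_isSymm hM, hV]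
    _ = (borderMatrix (M.row 0) V)ᵀ * borderMatrix (M.row 0) V :=
      (borderMatrix_transpose_mul_self _ _).symm

theorem posDef_chioCondensation [LinearOrder R] [IsStrictOrderedRing R] [StarRing R]
    [TrivialStar R] {M : Matrix (Fin (n + 1)) (Fin (n + 1)) R} (hM : M.PosDef) :
    (chioCondensation M).PosDef := by
  have hpos : 0 < M 0 0 := hM.diag_pos
  have hsymm (i j) : M j i = M i j := by simpa using hM.isHermitian.apply i j
  refine .of_dotProduct_mulVec_pos ?_ fun y hy ↦ ?_
  · ext i j
    simp [chioCondensation, hsymm j.succ i.succ, hsymm 0 j.succ, hsymm 0 i.succ, mul_comm]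
  -- `z` extends a multiple of `y` and is orthogonal to the first basis vector.
  set z : Fin (n + 1) → R := vecCons (-(vecTail (M.row 0) ⬝ᵥ y)) (M 0 0 • y) with hz
  have horth : M.row 0 ⬝ᵥ z = 0 := by simp [hz, vecHead]
  have hz0 : z ≠ 0 := fun h ↦ hy <| by
    have htail : M 0 0 • y = 0 := congrArg vecTail h
    exact (smul_eq_zero.mp htail).resolve_left hpos.ne'
  have hvalue : M 0 0 * (star z ⬝ᵥ M *ᵥ z) =
      M 0 0 * (M 0 0 * (y ⬝ᵥ chioCondensation M *ᵥ y)) := by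
    rw [star_trivial, apply_zero_zero_mul_dotProduct_mulVec, horth]
    simp [hz, mulVec_smul]
  have hzpos := mul_pos hpos (hM.dotProduct_mulVec_pos hz0)
  rw [hvalue, mul_pos_iff_of_pos_left hpos, mul_pos_iff_of_pos_left hpos] at hzpos
  rwa [star_trivial]

end Condensation

section Completable

variable {R : Type*} [CommRing R] {n : ℕ}

/-- A vector is completable if it is the first column of an invertible matrix, that is, if it
belongs to a basis of `R ^ (n + 1)`. Over the integers these are the primitive vectors. -/
def IsCompletable (x : Fin (n + 1) → R) : Prop :=
  ∃ U : Matrix (Fin (n + 1)) (Fin (n + 1)) R, IsUnit U.det ∧ U.col 0 = x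

theorem isCompletable_col {U : Matrix (Fin (n + 1)) (Fin (n + 1)) R} (hU : IsUnit U.det)
    (j : Fin (n + 1)) : IsCompletable (U.col j) := by
  refine ⟨U.submatrix id (Equiv.swap 0 j), ?_, ?_⟩
  · rw [det_permute']
    exact ((Equiv.swap 0 j).sign.isUnit.map (Int.castRingHom R)).mul hU
  · ext i
    simp

theorem IsCompletable.vecCons {x : Fin (n + 1) → R} (hx : IsCompletable x) (c : R) :
    IsCompletable (vecCons c x) := by
  obtain ⟨U, hU, rfl⟩ := hx
  have hdet : IsUnit (borderMatrix (Matrix.vecCons 1 fun _ ↦ c) U).det := by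
    simpa [det_borderMatrix] using hU
  convert isCompletable_col hdet 1 using 1
  ext i
  cases i using Fin.cases <;> simp [borderMatrix]

theorem IsCompletable.mulVec {U : Matrix (Fin (n + 1)) (Fin (n + 1)) R} (hU : IsUnit U.det)
    {x : Fin (n + 1) → R} (hx : IsCompletable x) : IsCompletable (U *ᵥ x) := by
  obtain ⟨V, hV, rfl⟩ := hx
  exact ⟨U * V, by simpa using hU.mul hV, rfl⟩

end Completable

section Congruence

theorem transpose_mul_mul_apply_self {R ι κ : Type*} [NonUnitalSemiring R] [Fintype ι]
    (M : Matrix ι ι R) (U : Matrix ι κ R) (i : κ) :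
    (Uᵀ * M * U) i i = U.col i ⬝ᵥ M *ᵥ U.col i := by
  rw [dotProduct_mulVec]
  rfl

theorem dotProduct_transpose_mul_mul_mulVec {R ι κ : Type*} [CommSemiring R] [Fintype ι]
    [Fintype κ] (M : Matrix ι ι R) (U : Matrix ι κ R) (x : κ → R) :
    x ⬝ᵥ (Uᵀ * M * U) *ᵥ x = (U *ᵥ x) ⬝ᵥ M *ᵥ (U *ᵥ x) := by
  simp only [← mulVec_mulVec, dotProduct_mulVec, vecMul_transpose]

theorem det_transpose_mul_mul_same {ι : Type*} [Fintype ι] [DecidableEq ι] (M : Matrix ι ι ℤ)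
    {U : Matrix ι ι ℤ} (hU : IsUnit U.det) : (Uᵀ * M * U).det = M.det := by
  rw [det_mul, det_mul, det_transpose, mul_right_comm, Int.isUnit_mul_self hU, one_mul]

theorem posDef_transpose_mul_mul_same {R ι : Type*} [CommRing R] [PartialOrder R] [StarRing R]
    [TrivialStar R] [Fintype ι] [DecidableEq ι] {M U : Matrix ι ι R} (hM : M.PosDef)
    (hU : IsUnit U.det) : (Uᵀ * M * U).PosDef := by
  rw [← conjTranspose_eq_transpose_of_trivial]
  exact hM.conjTranspose_mul_mul_same <|
    mulVec_injective_of_isUnit ((isUnit_iff_isUnit_det U).mpr hU)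

end Congruence

section Hermite

variable {n : ℕ} {M : Matrix (Fin (n + 1)) (Fin (n + 1)) ℤ}

theorem exists_isUnit_det_forall_isCompletable_le (hM : M.PosSemidef) :
    ∃ U : Matrix (Fin (n + 1)) (Fin (n + 1)) ℤ, IsUnit U.det ∧
      ∀ x, IsCompletable x → (Uᵀ * M * U) 0 0 ≤ x ⬝ᵥ (Uᵀ * M * U) *ᵥ x := by
  obtain ⟨_, ⟨U, hU, rfl⟩, hmin⟩ := exists_minimalFor_of_wellFoundedLT
    IsCompletable (fun x : Fin (n + 1) → ℤ ↦ (x ⬝ᵥ M *ᵥ x).toNat) ⟨_, 1, by simp, rfl⟩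
  refine ⟨U, hU, fun x hx ↦ ?_⟩
  have hnonneg : 0 ≤ (U *ᵥ x) ⬝ᵥ M *ᵥ (U *ᵥ x) := by
    simpa using hM.dotProduct_mulVec_nonneg (U *ᵥ x)
  have hle := hmin (hx.mulVec hU)
  rw [dotProduct_transpose_mul_mul_mulVec, transpose_mul_mul_apply_self]
  lia

theorem exists_four_mul_mul_add_sq_le {a : ℤ} (ha : a ≠ 0) (c : ℤ) :
    ∃ k : ℤ, 4 * (a * k + c) ^ 2 ≤ a ^ 2 := by
  have hdiv := Int.emod_add_mul_ediv (2 * c + |a|) (2 * a)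
  have hnonneg := Int.emod_nonneg (2 * c + |a|) (b := 2 * a) (by lia)
  have hlt := Int.emod_lt_abs (2 * c + |a|) (b := 2 * a) (by lia)
  rw [abs_mul, abs_two] at hlt
  set k := -((2 * c + |a|) / (2 * a))
  have habs : |2 * (a * k + c)| ≤ |a| := abs_le.mpr ⟨by linarith, by linarith⟩
  refine ⟨k, ?_⟩
  calc
    4 * (a * k + c) ^ 2 = (2 * (a * k + c)) ^ 2 := by ring
    _ ≤ a ^ 2 := sq_le_sq.mpr habs

theorem three_mul_sq_le_of_forall_le (hM : M.IsSymm) (hpos : 0 < M 0 0) {y : Fin n → ℤ}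
    (hmin : ∀ c, M 0 0 ≤ vecCons c y ⬝ᵥ M *ᵥ vecCons c y) :
    3 * M 0 0 ^ 2 ≤ 4 * (y ⬝ᵥ chioCondensation M *ᵥ y) := by
  obtain ⟨k, hk⟩ := exists_four_mul_mul_add_sq_le hpos.ne' (vecTail (M.row 0) ⬝ᵥ y)
  have hrow : M.row 0 ⬝ᵥ vecCons k y = M 0 0 * k + vecTail (M.row 0) ⬝ᵥ y := by simp [vecHead]
  have hsquare := apply_zero_zero_mul_dotProduct_mulVec M (vecCons k y) (vecCons k y)
  rw [col_eq_row_of_isSymm hM, dotProduct_comm _ (M.row 0), hrow, tail_cons] at hsquare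
  have hle := mul_le_mul_of_nonneg_left (hmin k) hpos.le
  linarith

theorem hermite_bound_succ {R : Type*} [CommRing R] [LinearOrder R] [IsStrictOrderedRing R]
    {s t a b d : R} (n : ℕ) (hs : 0 ≤ s) (ha : 0 < a) (hab : s * a ^ 2 ≤ t * b)
    (hb : (s ^ n * b ^ 2) ^ (n + 1) ≤ (t ^ n) ^ (n + 1) * (a ^ n * d) ^ 2) :
    (s ^ (n + 1) * a ^ 2) ^ (n + 2) ≤ (t ^ (n + 1)) ^ (n + 2) * d ^ 2 := by
  refine le_of_mul_le_mul_left ?_ (pow_pos ha (2 * n))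
  calc
    a ^ (2 * n) * (s ^ (n + 1) * a ^ 2) ^ (n + 2) = (s ^ n * (s * a ^ 2) ^ 2) ^ (n + 1) := by
      ring
    _ ≤ (s ^ n * (t * b) ^ 2) ^ (n + 1) := by gcongr
    _ = (t ^ 2) ^ (n + 1) * (s ^ n * b ^ 2) ^ (n + 1) := by ring
    _ ≤ (t ^ 2) ^ (n + 1) * ((t ^ n) ^ (n + 1) * (a ^ n * d) ^ 2) := by gcongr
    _ = a ^ (2 * n) * ((t ^ (n + 1)) ^ (n + 2) * d ^ 2) := by ring

/-- Hermite's inequality `a ≤ (4 / 3) ^ (n / 2) * det M ^ (1 / (n + 1))`, with the roots and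
denominators cleared. -/
theorem exists_isUnit_det_hermite_bound (hM : M.PosDef) :
    ∃ U : Matrix (Fin (n + 1)) (Fin (n + 1)) ℤ, IsUnit U.det ∧
      (3 ^ n * (Uᵀ * M * U) 0 0 ^ 2) ^ (n + 1) ≤ (4 ^ n) ^ (n + 1) * M.det ^ 2 := by
  induction n with
  | zero => exact ⟨1, by simp⟩
  | succ n ih =>
    obtain ⟨U, hU, hmin⟩ := exists_isUnit_det_forall_isCompletable_le hM.posSemidef
    refine ⟨U, hU, ?_⟩
    rw [← det_transpose_mul_mul_same M hU]
    have hN := posDef_transpose_mul_mul_same hM hU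
    set N := Uᵀ * M * U
    have hpos : 0 < N 0 0 := hN.diag_pos
    obtain ⟨V, hV, hbound⟩ := ih (posDef_chioCondensation hN)
    have hcond : (chioCondensation N).det = N 0 0 ^ n * N.det := by
      refine mul_left_cancel₀ hpos.ne' ?_
      rw [← pow_mul_det_eq_mul_det_chioCondensation, pow_succ', mul_assoc]
    rw [hcond] at hbound
    refine hermite_bound_succ n (by norm_num) hpos ?_ hbound
    rw [transpose_mul_mul_apply_self]
    exact three_mul_sq_le_of_forall_le (isHermitian_iff_isSymm.mp hN.isHermitian) hpos
      fun c ↦ hmin _ (IsCompletable.vecCons ⟨V, hV, rfl⟩ c)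

theorem eq_one_of_hermite_bound {a : ℤ} (ha : 0 < a) (hn : n ≤ 4)
    (h : (3 ^ n * a ^ 2) ^ (n + 1) ≤ (4 ^ n) ^ (n + 1)) : a = 1 := by
  have hbound : 3 ^ n * a ^ 2 ≤ 4 ^ n :=
    (pow_le_pow_iff_left₀ (by positivity) (by positivity) n.succ_ne_zero).mp h
  by_contra hne
  have hfour : 2 ^ 2 ≤ a ^ 2 := by
    gcongr
    lia
  interval_cases n <;> lia

theorem exists_eq_transpose_mul_self_of_posDef {n : ℕ} (hn : n ≤ 5) {M : Matrix (Fin n) (Fin n) ℤ}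
    (hM : M.PosDef) (hdet : M.det = 1) : ∃ V : Matrix (Fin n) (Fin n) ℤ, M = Vᵀ * V := by
  induction n with
  | zero => exact ⟨0, Subsingleton.elim _ _⟩
  | succ n ih =>
    obtain ⟨U, hU, hbound⟩ := exists_isUnit_det_hermite_bound hM
    have hNdet : (Uᵀ * M * U).det = 1 := (det_transpose_mul_mul_same M hU).trans hdet
    have hN := posDef_transpose_mul_mul_same hM hU
    have hone : (Uᵀ * M * U) 0 0 = 1 :=
      eq_one_of_hermite_bound hN.diag_pos (by lia : n ≤ 4) (by simpa [hdet] using hbound)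
    have hcond : (chioCondensation (Uᵀ * M * U)).det = 1 := by
      simpa [hone, hNdet] using (pow_mul_det_eq_mul_det_chioCondensation (Uᵀ * M * U)).symm
    obtain ⟨V, hV⟩ := ih (by lia) (posDef_chioCondensation hN) hcond
    obtain ⟨W, hW⟩ := exists_eq_transpose_mul_self_of_chioCondensation
      (isHermitian_iff_isSymm.mp hN.isHermitian) hone hV
    refine ⟨W * U⁻¹, ?_⟩
    calc
      M = (U * U⁻¹)ᵀ * M * (U * U⁻¹) := by simp [mul_nonsing_inv U hU]
      _ = U⁻¹ᵀ * (Uᵀ * M * U) * U⁻¹ := by simp only [transpose_mul, Matrix.mul_assoc]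
      _ = (W * U⁻¹)ᵀ * (W * U⁻¹) := by simp only [hW, transpose_mul, Matrix.mul_assoc]

end Hermite

section ThreeSquares

variable {n b p t : ℤ}

theorem posDef_of_mul_eq_add_one {a : ℤ} (hp : 0 < p) (hb : 0 < b) (hn : n * b = p + 1)
    (ha : a * p = t ^ 2 + b) : !![n, 0, 1; 0, p, t; 1, t, a].PosDef := by
  refine .of_dotProduct_mulVec_pos ?_ fun x hx ↦ ?_
  · ext i j
    fin_cases i <;> fin_cases j <;> simp
  have hform : star x ⬝ᵥ !![n, 0, 1; 0, p, t; 1, t, a] *ᵥ x =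
      n * x 0 ^ 2 + p * x 1 ^ 2 + a * x 2 ^ 2 + 2 * x 0 * x 2 + 2 * t * x 1 * x 2 := by
    simp only [dotProduct, mulVec, Fin.sum_univ_three, star_trivial, of_apply, cons_val', cons_val,
      cons_val_zero, cons_val_one, cons_val_fin_one]
    ring
  have hsquares : b * p * (star x ⬝ᵥ !![n, 0, 1; 0, p, t; 1, t, a] *ᵥ x) =
      p * x 0 ^ 2 + (p * x 0 + b * x 2) ^ 2 + b * (p * x 1 + t * x 2) ^ 2 := by
    rw [hform]
    linear_combination p * x 0 ^ 2 * hn + b * x 2 ^ 2 * ha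
  refine pos_of_mul_pos_right ?_ (mul_pos hb hp).le
  rw [hsquares]
  by_cases hx0 : x 0 = 0
  · by_cases hx2 : x 2 = 0
    · have hx1 : x 1 ≠ 0 := fun hx1 ↦ hx <| by
        ext i
        fin_cases i <;> assumption
      simp only [hx0, hx2, mul_zero, add_zero]
      positivity
    · simp only [hx0, mul_zero, zero_add]
      positivity
  · positivity

theorem exists_eq_sum_three_sq_of_dvd (hp : 0 < p) (hb : 0 < b) (hn : n * b = p + 1)
    (hdvd : p ∣ t ^ 2 + b) : ∃ u v w : ℤ, n = u ^ 2 + v ^ 2 + w ^ 2 := by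
  obtain ⟨a, ha⟩ := exists_eq_mul_left_of_dvd hdvd
  have hdet : !![n, 0, 1; 0, p, t; 1, t, a].det = 1 := by
    simp only [det_fin_three, of_apply, cons_val', cons_val, cons_val_zero, cons_val_one,
      cons_val_fin_one]
    linear_combination hn - n * ha
  obtain ⟨V, hV⟩ := exists_eq_transpose_mul_self_of_posDef (by norm_num)
    (posDef_of_mul_eq_add_one hp hb hn ha.symm) hdet
  refine ⟨V 0 0, V 1 0, V 2 0, ?_⟩
  simpa [mul_apply, Fin.sum_univ_three, sq] using congrFun₂ hV 0 0

end ThreeSquares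

end PositiveDefiniteMatrices

theorem exists_dvd_sq_add_of_dvd_add_one {p b : ℕ} (hp : p.Prime) (hp4 : p % 4 = 1)
    (hb4 : b % 4 = 1) (hdvd : b ∣ p + 1) : ∃ t : ℤ, (p : ℤ) ∣ t ^ 2 + b := by
  have : Fact p.Prime := ⟨hp⟩
  have hpodd : Odd p := Nat.odd_iff.mpr (by lia)
  have hbodd : Odd b := Nat.odd_iff.mpr (by lia)
  have hmod : (p : ℤ) ≡ -1 [ZMOD b] := by
    rw [Int.modEq_comm, Int.modEq_iff_dvd]
    simpa using Int.natCast_dvd_natCast.mpr hdvd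
  have hsymbol : jacobiSym (-b) p = 1 := by
    calc
      jacobiSym (-b) p = jacobiSym b p := by
        rw [jacobiSym.neg _ hpodd, ZMod.χ₄_nat_one_mod_four hp4, one_mul]
      _ = jacobiSym p b := jacobiSym.quadratic_reciprocity_one_mod_four hb4 hpodd
      _ = jacobiSym (-1) b := jacobiSym.mod_left' hmod
      _ = 1 := by rw [jacobiSym.at_neg_one hbodd, ZMod.χ₄_nat_one_mod_four hb4]
  obtain ⟨r, hr⟩ := ZMod.isSquare_of_jacobiSym_eq_one hsymbol
  obtain ⟨t, rfl⟩ := ZMod.intCast_surjective r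
  refine ⟨t, (ZMod.intCast_zmod_eq_zero_iff_dvd _ p).mp ?_⟩
  push_cast at hr ⊢
  linear_combination -hr

theorem exists_prime_and_mul_eq_add_one {n : ℕ} (hn : n % 4 = 2) :
    ∃ p b : ℕ, p.Prime ∧ p % 4 = 1 ∧ b % 4 = 1 ∧ n * b = p + 1 := by
  have hcoprime : (n - 1).Coprime (4 * n) := by
    have htwo : (n - 1).Coprime 2 := Nat.coprime_two_right.mpr (Nat.odd_iff.mpr (by lia))
    have hself : (n - 1).Coprime n :=
      (Nat.coprime_self_sub_left (by lia)).mpr (Nat.coprime_one_left n)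
    exact (htwo.pow_right 2).mul_right hself
  obtain ⟨p, hlt, hp, hmod⟩ := Nat.forall_exists_prime_gt_and_modEq (4 * n) (by lia) hcoprime
  obtain ⟨v, hv⟩ := (Nat.modEq_iff_dvd' (by lia)).mp hmod.symm
  have hmul : n * (4 * v + 1) = p + 1 := by
    rw [mul_add, mul_one, mul_left_comm, ← mul_assoc, ← hv]
    lia
  refine ⟨p, 4 * v + 1, hp, ?_, by lia, hmul⟩
  rw [mul_assoc] at hv
  lia

theorem exists_eq_sum_three_sq_of_mod_four_eq_two {n : ℕ} (hn : n % 4 = 2) :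
    ∃ u v w : ℤ, (n : ℤ) = u ^ 2 + v ^ 2 + w ^ 2 := by
  obtain ⟨p, b, hp, hp4, hb4, hmul⟩ := exists_prime_and_mul_eq_add_one hn
  obtain ⟨t, ht⟩ := exists_dvd_sq_add_of_dvd_add_one hp hp4 hb4 (Dvd.intro_left n hmul)
  exact exists_eq_sum_three_sq_of_dvd (mod_cast hp.pos) (mod_cast (by lia : 0 < b))
    (mod_cast hmul) ht

theorem exists_eq_two_mul_sq_add_sq_add_sq_of_even {m u v w : ℤ} (hu : Even u)
    (h : 2 * m = u ^ 2 + v ^ 2 + w ^ 2) : ∃ a b c : ℤ, m = 2 * a ^ 2 + b ^ 2 + c ^ 2 := by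
  have hvw : Even (v + w) := by
    have hsum : Even (u ^ 2 + v ^ 2 + w ^ 2) := h ▸ even_two_mul m
    simpa [parity_simps, hu] using hsum
  obtain ⟨a, rfl⟩ := hu.two_dvd
  obtain ⟨b, hb⟩ := hvw.two_dvd
  obtain rfl : v = 2 * b - w := by linarith
  exact ⟨a, b, b - w, by linarith⟩

theorem exists_eq_two_mul_sq_add_sq_add_sq_iff {m : ℤ} :
    (∃ a b c : ℤ, m = 2 * a ^ 2 + b ^ 2 + c ^ 2) ↔
      ∃ u v w : ℤ, 2 * m = u ^ 2 + v ^ 2 + w ^ 2 := by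
  constructor
  · rintro ⟨a, b, c, rfl⟩
    exact ⟨2 * a, b - c, b + c, by ring⟩
  · rintro ⟨u, v, w, h⟩
    have heven : Even u ∨ Even v ∨ Even w := by
      have hsum : Even (u ^ 2 + v ^ 2 + w ^ 2) := h ▸ even_two_mul m
      simp only [parity_simps] at hsum
      tauto
    rcases heven with hu | hv | hw
    · exact exists_eq_two_mul_sq_add_sq_add_sq_of_even hu h
    · exact exists_eq_two_mul_sq_add_sq_add_sq_of_even (v := u) (w := w) hv (by linarith)
    · exact exists_eq_two_mul_sq_add_sq_add_sq_of_even (v := u) (w := v) hw (by linarith)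

theorem odd_eq_two_sq_add_sq_add_sq (m : ℕ) (hm : 0 < m) (hodd : Odd m) :
    ∃ a b c : ℤ, (m : ℤ) = 2 * a ^ 2 + b ^ 2 + c ^ 2 := by
  have hmod : 2 * m % 4 = 2 := by
    obtain ⟨k, rfl⟩ := hodd
    lia
  rw [exists_eq_two_mul_sq_add_sq_add_sq_iff]
  exact mod_cast exists_eq_sum_three_sq_of_mod_four_eq_two hmod
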